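/- For s ∈ [0,1], define A_s := ⋃_{n≥1} { 2^n + ⌊s·2^{n−1}⌋ + t : t = 1, …, 2^{n−1} } ⊆ ℕ. Then for every s ∈ [0,1], A_s does not have an asymptotic density; indeed, liminf_{n→∞} (1/n) · #(A_s ∩ [1, n]) = 1/(2+s) < 2/(3+s) = limsup_{n→∞} (1/n) · #(A_s ∩ [1, n]). -/

import Mathlib

open Filter

/-- The set `A_s = ⋃_{n ≥ 1} {2^n + ⌊s·2^(n-1)⌋ + t : t = 1, …, 2^(n-1)}`. -/
def blockSet (s : ℝ) : Set ℕ :=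
  {m : ℕ | ∃ n : ℕ, 1 ≤ n ∧ ∃ t : ℕ, 1 ≤ t ∧ t ≤ 2 ^ (n - 1) ∧
    m = 2 ^ n + ⌊s * (2 : ℝ) ^ (n - 1)⌋₊ + t}

/-!
For `s ≥ 0` the blocks composing `A_s` are disjoint and successive: the block of length `2 ^ k`
starts right after `a k ≈ (2 + s) * 2 ^ k` and ends at `a k + 2 ^ k ≈ (3 + s) * 2 ^ k`, before
`a (k + 1)`. Hence `A_s` has `2 ^ k - 1` elements up to `a k` and `2 ^ (k + 1) - 1` up to
`a k + 2 ^ k`. The proportion of `A_s` in `[1, n]` increases along each block and decreases along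
each gap, so up to `O(1 / n)` it is smallest at the starts of the blocks, where it is about
`1 / (2 + s)`, and largest at their ends, where it is about `2 / (3 + s)`.
-/

open Finset Topology

section LiminfLimsup

variable {ι α : Type*} [ConditionallyCompleteLinearOrder α] [TopologicalSpace α] [OrderTopology α]
  {f : Filter ι} {u v w : ι → α} {r : α}

lemma liminf_eq_of_tendsto_of_eventually_le_of_frequently_le (hv : Tendsto v f (𝓝 r))
    (hw : Tendsto w f (𝓝 r)) (hvu : ∀ᶠ i in f, v i ≤ u i) (huw : ∃ᶠ i in f, u i ≤ w i) :
    liminf u f = r := by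
  have : f.NeBot := (frequently_true_iff_neBot f).1 (huw.mono fun _ _ => trivial)
  have hu : f.IsBoundedUnder (· ≥ ·) u := hv.isBoundedUnder_ge.mono_ge hvu
  obtain ⟨c, hwc⟩ := hw.isBoundedUnder_le.eventually_le
  have hu' : f.IsCoboundedUnder (· ≥ ·) u :=
    .of_frequently_le ((huw.and_eventually hwc).mono fun _ h => h.1.trans h.2)
  apply le_antisymm
  · calc
      liminf u f ≤ limsup w f := liminf_le_limsup_of_frequently_le huw hu hw.isBoundedUnder_le
      _ = r := hw.limsup_eq
  · calc
      r = liminf v f := hv.liminf_eq.symm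
      _ ≤ liminf u f := liminf_le_liminf hvu hv.isBoundedUnder_ge hu'

lemma limsup_eq_of_tendsto_of_eventually_le_of_frequently_le (hv : Tendsto v f (𝓝 r))
    (hw : Tendsto w f (𝓝 r)) (huv : ∀ᶠ i in f, u i ≤ v i) (hwu : ∃ᶠ i in f, w i ≤ u i) :
    limsup u f = r :=
  liminf_eq_of_tendsto_of_eventually_le_of_frequently_le (α := αᵒᵈ) hv hw huv hwu

end LiminfLimsup

section LinearGrowth

variable {c : ℕ → ℝ} {r C : ℝ}

lemma tendsto_one_div_mul_mul_add (r C : ℝ) :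
    Tendsto (fun n : ℕ => 1 / (n : ℝ) * (r * n + C)) atTop (𝓝 r) := by
  have hlim : Tendsto (fun n : ℕ => r + C / n) atTop (𝓝 (r + 0)) :=
    (tendsto_const_div_atTop_nhds_zero_nat C).const_add r
  rw [add_zero] at hlim
  refine hlim.congr' ?_
  filter_upwards [eventually_ne_atTop 0] with n hn
  field_simp

lemma liminf_one_div_mul_eq (hle : ∀ᶠ n : ℕ in atTop, r * n ≤ c n + C)
    (hge : ∃ᶠ n : ℕ in atTop, c n ≤ r * n + C) :
    liminf (fun n : ℕ => 1 / (n : ℝ) * c n) atTop = r := by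
  refine liminf_eq_of_tendsto_of_eventually_le_of_frequently_le
    (tendsto_one_div_mul_mul_add r (-C)) (tendsto_one_div_mul_mul_add r C)
    (hle.mono fun n hn => ?_) (hge.mono fun n hn => ?_)
  · gcongr
    linarith
  · gcongr

lemma limsup_one_div_mul_eq (hge : ∀ᶠ n : ℕ in atTop, c n ≤ r * n + C)
    (hle : ∃ᶠ n : ℕ in atTop, r * n ≤ c n + C) :
    limsup (fun n : ℕ => 1 / (n : ℝ) * c n) atTop = r := by
  refine limsup_eq_of_tendsto_of_eventually_le_of_frequently_le
    (tendsto_one_div_mul_mul_add r C) (tendsto_one_div_mul_mul_add r (-C))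
    (hge.mono fun n hn => ?_) (hle.mono fun n hn => ?_)
  · gcongr
  · gcongr
    linarith

end LinearGrowth

/-- The counting function `N ↦ #(A ∩ [1, N])` of a set `A` of natural numbers, in terms of which
asymptotic densities are defined; `0` is not counted. -/
noncomputable def countUpTo (A : Set ℕ) (N : ℕ) : ℕ :=
  Nat.card (A ∩ Set.Icc 1 N : Set ℕ)

lemma countUpTo_eq_add_ncard (A : Set ℕ) {M N : ℕ} (hMN : M ≤ N) :
    countUpTo A N = countUpTo A M + (A ∩ Set.Ioc M N).ncard := by
  have hsplit : A ∩ Set.Icc 1 N = (A ∩ Set.Icc 1 M) ∪ (A ∩ Set.Ioc M N) := by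
    rw [← Set.inter_union_distrib_left]
    congr 1
    ext m
    simp only [Set.mem_Icc, Set.mem_union, Set.mem_Ioc]
    omega
  have hdisj : Disjoint (Set.Icc 1 M) (Set.Ioc M N) :=
    Set.disjoint_left.2 fun _ h h' => h'.1.not_ge h.2
  rw [countUpTo, countUpTo, Nat.card_coe_set_eq, Nat.card_coe_set_eq, hsplit,
    Set.ncard_union_eq (hdisj.mono Set.inter_subset_right Set.inter_subset_right)
      ((Set.finite_Icc 1 M).inter_of_right A) ((Set.finite_Ioc M N).inter_of_right A)]

section SuccessiveBlocks

lemma iUnion_Ioc_inter_Ioc_of_le {α : Type*} [LinearOrder α] {a b : ℕ → α} (ha : Monotone a)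
    (hba : ∀ k, b k ≤ a (k + 1)) {k : ℕ} {x : α} (hx : x ≤ a (k + 1)) :
    (⋃ i, Set.Ioc (a i) (b i)) ∩ Set.Ioc (a k) x = Set.Ioc (a k) (min x (b k)) := by
  ext m
  simp only [Set.mem_inter_iff, Set.mem_iUnion, Set.mem_Ioc, le_min_iff]
  constructor
  · rintro ⟨⟨i, hai, hbi⟩, hak, hmx⟩
    have hki : k ≤ i := by
      by_contra! hik
      exact (hbi.trans ((hba i).trans (ha hik))).not_gt hak
    have hik : i ≤ k := by
      by_contra! hki
      exact (hmx.trans (hx.trans (ha hki))).not_gt hai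
    obtain rfl := le_antisymm hik hki
    exact ⟨hak, hmx, hbi⟩
  · rintro ⟨hak, hmx, hbk⟩
    exact ⟨⟨k, hak, hbk⟩, hak, hmx⟩

variable {a b : ℕ → ℕ}

lemma countUpTo_iUnion_Ioc_start (ha : Monotone a) (hba : ∀ k, b k ≤ a (k + 1)) (k : ℕ) :
    countUpTo (⋃ i, Set.Ioc (a i) (b i)) (a k) = ∑ i ∈ range k, (b i - a i) := by
  induction k with
  | zero =>
    have hempty : (⋃ i, Set.Ioc (a i) (b i)) ∩ Set.Icc 1 (a 0) = ∅ := by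
      rw [← Set.disjoint_iff_inter_eq_empty, Set.disjoint_iUnion_left]
      exact fun i => Set.disjoint_left.2 fun _ h h' => (h'.2.trans (ha i.zero_le)).not_gt h.1
    rw [countUpTo, hempty, Nat.card_coe_set_eq, Set.ncard_empty, range_zero, sum_empty]
  | succ k ih =>
    rw [countUpTo_eq_add_ncard _ (ha k.le_succ), ih, iUnion_Ioc_inter_Ioc_of_le ha hba le_rfl,
      min_eq_right (hba k), Set.ncard_Ioc_nat, sum_range_succ]

lemma countUpTo_iUnion_Ioc (ha : Monotone a) (hba : ∀ k, b k ≤ a (k + 1)) {k N : ℕ}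
    (hN : a k ≤ N) (hN' : N ≤ a (k + 1)) :
    countUpTo (⋃ i, Set.Ioc (a i) (b i)) N =
      ∑ i ∈ range k, (b i - a i) + (min N (b k) - a k) := by
  rw [countUpTo_eq_add_ncard _ hN, countUpTo_iUnion_Ioc_start ha hba,
    iUnion_Ioc_inter_Ioc_of_le ha hba hN', Set.ncard_Ioc_nat]

end SuccessiveBlocks

/-- The integer just before the block of length `2 ^ k` of `blockSet s`. With respect to the index
`n ≥ 1` in the definition of `blockSet`, `k = n - 1`, which avoids the truncated subtraction. -/
noncomputable def blockStart (s : ℝ) (k : ℕ) : ℕ :=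
  2 ^ (k + 1) + ⌊s * (2 : ℝ) ^ k⌋₊

lemma blockSet_eq_iUnion_Ioc (s : ℝ) :
    blockSet s = ⋃ k, Set.Ioc (blockStart s k) (blockStart s k + 2 ^ k) := by
  ext m
  simp only [blockSet, blockStart, Set.mem_ofPred_eq, Set.mem_iUnion, Set.mem_Ioc]
  constructor
  · rintro ⟨n, hn, t, ht, ht', rfl⟩
    obtain ⟨k, rfl⟩ := Nat.exists_eq_add_of_le' hn
    rw [Nat.add_sub_cancel] at ht' ⊢
    exact ⟨k, by omega, by omega⟩
  · rintro ⟨k, hlt, hle⟩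
    refine ⟨k + 1, k.succ_pos, m - (2 ^ (k + 1) + ⌊s * (2 : ℝ) ^ k⌋₊), ?_⟩
    rw [Nat.add_sub_cancel]
    omega

lemma lt_blockStart_add_one (s : ℝ) (k : ℕ) : (2 + s) * 2 ^ k < blockStart s k + 1 := by
  have hfloor := Nat.lt_floor_add_one (s * (2 : ℝ) ^ k)
  push_cast [blockStart, pow_succ]
  linarith

section Nonneg

variable {s : ℝ}

lemma blockStart_le (hs : 0 ≤ s) (k : ℕ) : (blockStart s k : ℝ) ≤ (2 + s) * 2 ^ k := by
  have hfloor : (⌊s * (2 : ℝ) ^ k⌋₊ : ℝ) ≤ s * 2 ^ k := Nat.floor_le (by positivity)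
  push_cast [blockStart, pow_succ]
  linarith

lemma blockStart_add_two_pow_le (hs : 0 ≤ s) (k : ℕ) :
    blockStart s k + 2 ^ k ≤ blockStart s (k + 1) := by
  have hfloor : ⌊s * (2 : ℝ) ^ k⌋₊ ≤ ⌊s * (2 : ℝ) ^ (k + 1)⌋₊ := by
    gcongr
    · norm_num
    · exact k.le_succ
  simp only [blockStart, pow_succ] at hfloor ⊢
  omega

lemma blockStart_strictMono (hs : 0 ≤ s) : StrictMono (blockStart s) :=
  strictMono_nat_of_lt_succ fun k =>
    (Nat.lt_add_of_pos_right (by positivity)).trans_le (blockStart_add_two_pow_le hs k)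

lemma countUpTo_blockSet_add_one (hs : 0 ≤ s) {k N : ℕ} (hN : blockStart s k ≤ N)
    (hN' : N ≤ blockStart s (k + 1)) :
    countUpTo (blockSet s) N + 1 = 2 ^ k + (min N (blockStart s k + 2 ^ k) - blockStart s k) := by
  have hgeom : ∑ i ∈ range k, 2 ^ i + 1 = 2 ^ k := by
    simpa using geom_sum_mul_add (1 : ℕ) k
  rw [blockSet_eq_iUnion_Ioc, countUpTo_iUnion_Ioc (blockStart_strictMono hs).monotone
    (blockStart_add_two_pow_le hs) hN hN']
  simp only [Nat.add_sub_cancel_left]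
  omega

lemma countUpTo_blockSet_add_one_of_mem_block (hs : 0 ≤ s) {k i : ℕ} (hi : i ≤ 2 ^ k) :
    (countUpTo (blockSet s) (blockStart s k + i) : ℝ) + 1 = 2 ^ k + i := by
  have hcount := countUpTo_blockSet_add_one hs (Nat.le_add_right (blockStart s k) i)
    ((Nat.add_le_add_left hi _).trans (blockStart_add_two_pow_le hs k))
  rw [min_eq_left (Nat.add_le_add_left hi _), Nat.add_sub_cancel_left] at hcount
  exact_mod_cast hcount

lemma countUpTo_blockSet_add_one_of_mem_gap (hs : 0 ≤ s) {k N : ℕ} (hN : blockStart s k + 2 ^ k ≤ N)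
    (hN' : N ≤ blockStart s (k + 1)) :
    (countUpTo (blockSet s) N : ℝ) + 1 = 2 ^ (k + 1) := by
  have hcount := countUpTo_blockSet_add_one hs ((Nat.le_add_right _ _).trans hN) hN'
  rw [min_eq_right hN, Nat.add_sub_cancel_left, ← two_mul, ← pow_succ'] at hcount
  exact_mod_cast hcount

lemma exists_mem_block_or_mem_gap (hs : 0 ≤ s) {N : ℕ} (hN : blockStart s 0 < N) :
    ∃ k, (∃ i ≤ 2 ^ k, N = blockStart s k + i) ∨
      (blockStart s k + 2 ^ k ≤ N ∧ N ≤ blockStart s (k + 1)) := by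
  have hmono := blockStart_strictMono hs
  obtain ⟨k, hk, hk'⟩ := hmono.exists_between_of_tendsto_atTop hmono.tendsto_atTop hN
  refine ⟨k, (le_total N (blockStart s k + 2 ^ k)).imp (fun h => ?_) fun h => ⟨h, hk'⟩⟩
  exact ⟨N - blockStart s k, by omega, by omega⟩

lemma le_mul_countUpTo_blockSet_add_one (hs : 0 ≤ s) {N : ℕ} (hN : blockStart s 0 < N) :
    (N : ℝ) ≤ (2 + s) * (countUpTo (blockSet s) N + 1) := by
  obtain ⟨k, ⟨i, hi, rfl⟩ | ⟨hN, hN'⟩⟩ := exists_mem_block_or_mem_gap hs hN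
  · rw [countUpTo_blockSet_add_one_of_mem_block hs hi]
    push_cast
    calc
      (blockStart s k : ℝ) + i ≤ (2 + s) * 2 ^ k + (2 + s) * i := by
        gcongr
        · exact blockStart_le hs k
        · exact le_mul_of_one_le_left i.cast_nonneg (by linarith)
      _ = (2 + s) * (2 ^ k + i) := by ring
  · rw [countUpTo_blockSet_add_one_of_mem_gap hs hN hN']
    calc
      (N : ℝ) ≤ blockStart s (k + 1) := mod_cast hN'
      _ ≤ (2 + s) * 2 ^ (k + 1) := blockStart_le hs (k + 1)

lemma mul_countUpTo_blockSet_add_one_le (hs : 0 ≤ s) {N : ℕ} (hN : blockStart s 0 < N) :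
    (3 + s) * ((countUpTo (blockSet s) N : ℝ) + 1) ≤ 2 * (N + 1) := by
  obtain ⟨k, ⟨i, hi, rfl⟩ | ⟨hN, hN'⟩⟩ := exists_mem_block_or_mem_gap hs hN
  · rw [countUpTo_blockSet_add_one_of_mem_block hs hi]
    have hi' : (i : ℝ) ≤ 2 ^ k := mod_cast hi
    push_cast
    calc
      (3 + s) * (2 ^ k + i) = (3 + s) * 2 ^ k + (1 + s) * i + 2 * i := by ring
      _ ≤ (3 + s) * 2 ^ k + (1 + s) * 2 ^ k + 2 * i := by gcongr
      _ = 2 * ((2 + s) * 2 ^ k + i) := by ring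
      _ ≤ 2 * (blockStart s k + 1 + i) := by gcongr; exact (lt_blockStart_add_one s k).le
      _ = 2 * (blockStart s k + i + 1) := by ring
  · rw [countUpTo_blockSet_add_one_of_mem_gap hs hN hN']
    calc
      (3 + s) * 2 ^ (k + 1) = 2 * ((2 + s) * 2 ^ k + 2 ^ k) := by ring
      _ ≤ 2 * (blockStart s k + 1 + 2 ^ k) := by gcongr; exact (lt_blockStart_add_one s k).le
      _ = 2 * ((blockStart s k + 2 ^ k : ℕ) + 1) := by push_cast; ring
      _ ≤ 2 * (N + 1) := by gcongr

lemma mul_countUpTo_blockSet_blockStart_add_one_lt (hs : 0 ≤ s) (k : ℕ) :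
    (2 + s) * ((countUpTo (blockSet s) (blockStart s k) : ℝ) + 1) < blockStart s k + 1 := by
  have hcount := countUpTo_blockSet_add_one_of_mem_block hs (Nat.zero_le (2 ^ k))
  rw [Nat.cast_zero, add_zero, add_zero] at hcount
  rw [hcount]
  exact lt_blockStart_add_one s k

lemma two_mul_le_mul_countUpTo_blockSet_add_one (hs : 0 ≤ s) (k : ℕ) :
    2 * ((blockStart s k + 2 ^ k : ℕ) : ℝ) ≤
      (3 + s) * (countUpTo (blockSet s) (blockStart s k + 2 ^ k) + 1) := by
  rw [countUpTo_blockSet_add_one_of_mem_block hs le_rfl]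
  push_cast
  linarith [blockStart_le hs k]

lemma liminf_countUpTo_blockSet (hs : 0 ≤ s) :
    liminf (fun n : ℕ => 1 / (n : ℝ) * countUpTo (blockSet s) n) atTop = 1 / (2 + s) := by
  have hpos : 0 < 2 + s := by linarith
  apply liminf_one_div_mul_eq (C := 1)
  · filter_upwards [eventually_gt_atTop (blockStart s 0)] with n hn
    rw [one_div_mul_eq_div, div_le_iff₀' hpos]
    exact le_mul_countUpTo_blockSet_add_one hs hn
  · refine (blockStart_strictMono hs).tendsto_atTop.frequently (.of_forall fun k => ?_)
    rw [one_div_mul_eq_div, ← sub_le_iff_le_add, le_div_iff₀' hpos]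
    linarith [mul_countUpTo_blockSet_blockStart_add_one_lt hs k]

lemma limsup_countUpTo_blockSet (hs : 0 ≤ s) :
    limsup (fun n : ℕ => 1 / (n : ℝ) * countUpTo (blockSet s) n) atTop = 2 / (3 + s) := by
  have hpos : 0 < 3 + s := by linarith
  have hends : Tendsto (fun k => blockStart s k + 2 ^ k) atTop atTop :=
    tendsto_atTop_mono (fun _ => Nat.le_add_right _ _) (blockStart_strictMono hs).tendsto_atTop
  apply limsup_one_div_mul_eq (C := 1)
  · filter_upwards [eventually_gt_atTop (blockStart s 0)] with n hn
    rw [div_mul_eq_mul_div, ← sub_le_iff_le_add, le_div_iff₀' hpos]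
    linarith [mul_countUpTo_blockSet_add_one_le hs hn]
  · refine hends.frequently (.of_forall fun k => ?_)
    rw [div_mul_eq_mul_div, div_le_iff₀' hpos]
    exact two_mul_le_mul_countUpTo_blockSet_add_one hs k

end Nonneg

theorem blockSet_no_density_general (s : ℝ) (hs : 0 ≤ s) :
    liminf (fun n : ℕ => (1 / (n : ℝ)) * Nat.card (blockSet s ∩ Set.Icc 1 n : Set ℕ)) atTop
        = 1 / (2 + s) ∧
      (1 : ℝ) / (2 + s) < 2 / (3 + s) ∧
      limsup (fun n : ℕ => (1 / (n : ℝ)) * Nat.card (blockSet s ∩ Set.Icc 1 n : Set ℕ)) atTop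
        = 2 / (3 + s) := by
  refine ⟨liminf_countUpTo_blockSet hs, ?_, limsup_countUpTo_blockSet hs⟩
  rw [div_lt_div_iff₀ (by linarith) (by linarith)]
  linarith

/-- For every `s ∈ [0,1]`, `A_s` has no asymptotic density: its lower density `1/(2+s)` is
strictly smaller than its upper density `2/(3+s)`. -/
theorem blockSet_no_density :
    ∀ s ∈ Set.Icc (0 : ℝ) 1,
      liminf (fun n : ℕ => (1 / (n : ℝ)) * Nat.card (blockSet s ∩ Set.Icc 1 n : Set ℕ)) atTop
          = 1 / (2 + s) ∧
        (1 : ℝ) / (2 + s) < 2 / (3 + s) ∧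
        limsup (fun n : ℕ => (1 / (n : ℝ)) * Nat.card (blockSet s ∩ Set.Icc 1 n : Set ℕ)) atTop
          = 2 / (3 + s) :=
  fun s hs => blockSet_no_density_general s hs.1
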